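/- arXiv:2005.11110 — 2 statements merged into one kernel-verified Lean document; each statement's English description precedes it below -/
import Mathlib

section
/- Under the deep-GP marginalisation setup, each matrix Σ̂^l (l = 1, …, L) is symmetric positive definite, and for all f^1 ∈ ℝ^{T_1}, …, f^L ∈ ℝ^{T_L} one has the identity ∫_{ℝ^m} N(f_M; μ_M, S_M) · ∏_{l=1}^{L} N(f^l; A^l(f^{l−1}) f_M^l, B^l(f^{l−1})) df_M = ∏_{l=1}^{L} N(f^l; μ̂^l, Σ̂^l); that is, the inducing outputs f_M can be marginalised analytically and the resulting joint density of the layer outputs factorises into the stated chain of Gaussian conditionals (Theorem 1 of the paper). -/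
open Matrix MeasureTheory Real

noncomputable section

/-- The multivariate Gaussian density
`N(x; μ, S) = (2π)^{−d/2} (det S)^{−1/2} exp(−(1/2)(x−μ)ᵀ S⁻¹ (x−μ))`. -/
def gaussPDF {ι : Type*} [Fintype ι] [DecidableEq ι]
    (μ : ι → ℝ) (S : Matrix ι ι ℝ) (x : ι → ℝ) : ℝ :=
  (2 * Real.pi) ^ (-(Fintype.card ι : ℝ) / 2) * S.det ^ (-(1 : ℝ) / 2) *
    Real.exp (-(1 / 2 : ℝ) * ((x - μ) ⬝ᵥ (S⁻¹ *ᵥ (x - μ))))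

variable {L : ℕ}

/-- Indices lying in layers strictly before layer `l`. -/
abbrev Below (d : Fin L → ℕ) (l : Fin L) : Type :=
  {p : (i : Fin L) × Fin (d i) // p.1 < l}

/-- The block submatrix `S^{1:l−1,1:l−1}`. -/
def prevBlock {d : Fin L → ℕ}
    (S : Matrix ((i : Fin L) × Fin (d i)) ((i : Fin L) × Fin (d i)) ℝ) (l : Fin L) :
    Matrix (Below d l) (Below d l) ℝ :=
  Matrix.of fun p q => S p.val q.val

/-- The block row `S^{l,1:l−1}`. -/
def rowBlock {d : Fin L → ℕ}
    (S : Matrix ((i : Fin L) × Fin (d i)) ((i : Fin L) × Fin (d i)) ℝ) (l : Fin L) :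
    Matrix (Fin (d l)) (Below d l) ℝ :=
  Matrix.of fun i q => S ⟨l, i⟩ q.val

/-- The block column `S^{1:l−1,l}`. -/
def colBlock {d : Fin L → ℕ}
    (S : Matrix ((i : Fin L) × Fin (d i)) ((i : Fin L) × Fin (d i)) ℝ) (l : Fin L) :
    Matrix (Below d l) (Fin (d l)) ℝ :=
  Matrix.of fun p j => S p.val ⟨l, j⟩

/-- The diagonal block `S^{ll}`. -/
def diagBlock {d : Fin L → ℕ}
    (S : Matrix ((i : Fin L) × Fin (d i)) ((i : Fin L) × Fin (d i)) ℝ) (l : Fin L) :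
    Matrix (Fin (d l)) (Fin (d l)) ℝ :=
  Matrix.of fun i j => S ⟨l, i⟩ ⟨l, j⟩

/-- The subvector `x^{1:l−1}`. -/
def belowVec {d : Fin L → ℕ} (x : ((i : Fin L) × Fin (d i)) → ℝ) (l : Fin L) :
    Below d l → ℝ := fun p => x p.val

/-- The subvector `x^l`. -/
def blockVec {d : Fin L → ℕ} (x : ((i : Fin L) × Fin (d i)) → ℝ) (l : Fin L) :
    Fin (d l) → ℝ := fun i => x ⟨l, i⟩

/-- `μ̂^l = μ̃^l + S̃^{l,1:l−1}(S̃^{1:l−1,1:l−1})⁻¹(f^{1:l−1} − μ̃^{1:l−1})`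
(for `l = 1` the correction term is a sum over the empty index set). -/
def muHat {d : Fin L → ℕ} (μ : ((i : Fin L) × Fin (d i)) → ℝ)
    (S : Matrix ((i : Fin L) × Fin (d i)) ((i : Fin L) × Fin (d i)) ℝ)
    (f : ((i : Fin L) × Fin (d i)) → ℝ) (l : Fin L) : Fin (d l) → ℝ :=
  blockVec μ l + rowBlock S l *ᵥ ((prevBlock S l)⁻¹ *ᵥ (belowVec f l - belowVec μ l))

/-- `Σ̂^l = S̃^{ll} − S̃^{l,1:l−1}(S̃^{1:l−1,1:l−1})⁻¹S̃^{1:l−1,l}` (for `l = 1`,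
`Σ̂^1 = S̃^{11}`). -/
def sigmaHat {d : Fin L → ℕ}
    (S : Matrix ((i : Fin L) × Fin (d i)) ((i : Fin L) × Fin (d i)) ℝ) (l : Fin L) :
    Matrix (Fin (d l)) (Fin (d l)) ℝ :=
  diagBlock S l - rowBlock S l * (prevBlock S l)⁻¹ * colBlock S l

/-- The block `S_M^{ll'}` of the inducing-output covariance pairing layers `l` and `l'`. -/
def SMblock {m : Fin L → ℕ}
    (SM : Matrix ((i : Fin L) × Fin (m i)) ((i : Fin L) × Fin (m i)) ℝ) (l l' : Fin L) :
    Matrix (Fin (m l)) (Fin (m l')) ℝ :=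
  Matrix.of fun a b => SM ⟨l, a⟩ ⟨l', b⟩

/-- `μ̃^l := A^l(f^{l−1}) μ_M^l`, collected into one layered vector. -/
def muTilde (T : Fin (L + 1) → ℕ) (m : Fin L → ℕ)
    (A : ∀ l : Fin L, (Fin (T l.castSucc) → ℝ) → Matrix (Fin (T l.succ)) (Fin (m l)) ℝ)
    (μM : ((i : Fin L) × Fin (m i)) → ℝ) (f : ∀ l : Fin (L + 1), Fin (T l) → ℝ) :
    ((l : Fin L) × Fin (T l.succ)) → ℝ :=
  fun p => (A p.1 (f p.1.castSucc) *ᵥ fun a => μM ⟨p.1, a⟩) p.2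

/-- `S̃^{ll'} := δ_{ll'} B^l(f^{l−1}) + A^l(f^{l−1}) S_M^{ll'} A^{l'}(f^{l'−1})ᵀ`,
collected into one layered matrix. -/
def Stilde (T : Fin (L + 1) → ℕ) (m : Fin L → ℕ)
    (A : ∀ l : Fin L, (Fin (T l.castSucc) → ℝ) → Matrix (Fin (T l.succ)) (Fin (m l)) ℝ)
    (B : ∀ l : Fin L, (Fin (T l.castSucc) → ℝ) → Matrix (Fin (T l.succ)) (Fin (T l.succ)) ℝ)
    (SM : Matrix ((i : Fin L) × Fin (m i)) ((i : Fin L) × Fin (m i)) ℝ)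
    (f : ∀ l : Fin (L + 1), Fin (T l) → ℝ) :
    Matrix ((l : Fin L) × Fin (T l.succ)) ((l : Fin L) × Fin (T l.succ)) ℝ :=
  Matrix.of fun p q =>
    (if h : p.1 = q.1 then
        B p.1 (f p.1.castSucc) p.2 (Fin.cast (show T q.1.succ = T p.1.succ by rw [h]) q.2)
      else 0) +
      (A p.1 (f p.1.castSucc) * SMblock SM p.1 q.1 * (A q.1 (f q.1.castSucc))ᵀ) p.2 q.2

theorem gaussPDF_reindex {ι κ : Type*} [Fintype ι] [DecidableEq ι] [Fintype κ] [DecidableEq κ]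
    (e : ι ≃ κ) (μ : κ → ℝ) (S : Matrix κ κ ℝ) (x : κ → ℝ) :
    gaussPDF (μ ∘ e) (S.submatrix e e) (x ∘ e) = gaussPDF μ S x := by
  unfold gaussPDF
  have h1 : (x ∘ e - μ ∘ e) = (x - μ) ∘ e := rfl
  rw [Fintype.card_congr e, det_submatrix_equiv_self, inv_submatrix_equiv, h1,
    Matrix.submatrix_mulVec_equiv]
  have h2 : ((x - μ) ∘ ⇑e) ∘ ⇑e.symm = x - μ := by ext; simp
  rw [h2, comp_equiv_dotProduct_comp_equiv]

theorem posDef_blocks {ι κ : Type*} [Fintype ι] [DecidableEq ι] [Fintype κ] [DecidableEq κ]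
    {A : Matrix ι ι ℝ} {B : Matrix ι κ ℝ} {C : Matrix κ ι ℝ} {D : Matrix κ κ ℝ}
    (h : (fromBlocks A B C D).PosDef) :
    A.PosDef ∧ C = Bᵀ ∧ (D - C * A⁻¹ * B).PosDef := by
  have hA : A.PosDef := by
    have := h.submatrix (e := Sum.inl) Sum.inl_injective
    exact this
  have hC : C = Bᵀ := by
    ext i j
    have := h.isHermitian.apply (Sum.inr i) (Sum.inl j)
    simpa using this.symm
  have := hA.isUnit.invertible
  refine ⟨hA, hC, ?_⟩
  have hps : (D - C * A⁻¹ * B).PosSemidef := by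
    subst hC
    exact (PosDef.fromBlocks₁₁ B D hA).1 h.posSemidef
  rw [hps.posDef_iff_det_ne_zero]
  have hd := h.det_pos
  rw [det_fromBlocks₁₁, invOf_eq_nonsing_inv] at hd
  intro h0
  simp [h0] at hd

theorem gaussPDF_chain {ι κ : Type*} [Fintype ι] [DecidableEq ι] [Fintype κ] [DecidableEq κ]
    {A : Matrix ι ι ℝ} {B : Matrix ι κ ℝ} {C : Matrix κ ι ℝ} {D : Matrix κ κ ℝ}
    (h : (fromBlocks A B C D).PosDef) (μ x : ι → ℝ) (ν y : κ → ℝ) :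
    gaussPDF (Sum.elim μ ν) (fromBlocks A B C D) (Sum.elim x y) =
      gaussPDF μ A x * gaussPDF (ν + C *ᵥ (A⁻¹ *ᵥ (x - μ))) (D - C * A⁻¹ * B) y := by
  obtain ⟨hA, hC, hS⟩ := posDef_blocks h
  have hAi := hA.isUnit.invertible
  have hAd : IsUnit A.det := hA.det_pos.ne'.isUnit
  have hdet : (fromBlocks A B C D).det = A.det * (D - C * A⁻¹ * B).det := by
    rw [det_fromBlocks₁₁, invOf_eq_nonsing_inv]
  have hSd : IsUnit (D - C * A⁻¹ * B).det := hS.det_pos.ne'.isUnit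
  have hFd : IsUnit (fromBlocks A B C D).det := h.det_pos.ne'.isUnit
  obtain ⟨r, hr⟩ : ∃ r, r = x - μ := ⟨_, rfl⟩
  obtain ⟨s, hs⟩ : ∃ s, s = y - ν := ⟨_, rfl⟩
  have e1 : Sum.elim x y - Sum.elim μ ν = Sum.elim r s := by
    subst hr hs; ext (i | i) <;> simp
  have e2 : y - (ν + C *ᵥ (A⁻¹ *ᵥ r)) = s - C *ᵥ (A⁻¹ *ᵥ r) := by
    subst hs; abel
  obtain ⟨u, hu⟩ : ∃ u, u = (D - C * A⁻¹ * B)⁻¹ *ᵥ (s - C *ᵥ (A⁻¹ *ᵥ r)) := ⟨_, rfl⟩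
  have hu' : (D - C * A⁻¹ * B) *ᵥ u = s - C *ᵥ (A⁻¹ *ᵥ r) := by
    rw [hu, mulVec_mulVec, mul_nonsing_inv _ hSd, one_mulVec]
  have hinv : (fromBlocks A B C D)⁻¹ *ᵥ (Sum.elim r s) =
      Sum.elim (A⁻¹ *ᵥ (r - B *ᵥ u)) u := by
    have : (fromBlocks A B C D) *ᵥ Sum.elim (A⁻¹ *ᵥ (r - B *ᵥ u)) u = Sum.elim r s := by
      rw [fromBlocks_mulVec]
      simp only [Sum.elim_comp_inl, Sum.elim_comp_inr]
      congr 1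
      · rw [mulVec_mulVec, mul_nonsing_inv _ hAd, one_mulVec]; abel
      · rw [sub_mulVec, ← mulVec_mulVec, ← mulVec_mulVec] at hu'
        rw [mulVec_sub, mulVec_sub]
        have : s = D *ᵥ u - C *ᵥ (A⁻¹ *ᵥ (B *ᵥ u)) + C *ᵥ (A⁻¹ *ᵥ r) := by rw [hu']; abel
        rw [this]; abel
    rw [← this, mulVec_mulVec, nonsing_inv_mul _ hFd, one_mulVec]
  have hsymm : r ⬝ᵥ (A⁻¹ *ᵥ (B *ᵥ u)) = (C *ᵥ (A⁻¹ *ᵥ r)) ⬝ᵥ u := by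
    have hAt : (A⁻¹)ᵀ = A⁻¹ := by
      rw [transpose_nonsing_inv]
      congr 1
      simpa using hA.isHermitian.eq
    rw [hC, ← hAt, dotProduct_mulVec, dotProduct_mulVec, hAt, ← mulVec_transpose, ← mulVec_transpose,
      hAt]
  have hq : (Sum.elim r s) ⬝ᵥ Sum.elim (A⁻¹ *ᵥ (r - B *ᵥ u)) u =
      r ⬝ᵥ (A⁻¹ *ᵥ r) + (s - C *ᵥ (A⁻¹ *ᵥ r)) ⬝ᵥ u := by
    rw [sumElim_dotProduct_sumElim, mulVec_sub, dotProduct_sub, sub_dotProduct, hsymm]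
    ring
  unfold gaussPDF
  rw [e1, ← hr, e2, hinv, hq, ← hu, hdet, Real.mul_rpow hA.det_pos.le hS.det_pos.le,
    Fintype.card_sum, mul_add, Real.exp_add]
  have : (-((Fintype.card ι + Fintype.card κ : ℕ) : ℝ) / 2) =
    -(Fintype.card ι : ℝ) / 2 + -(Fintype.card κ : ℝ) / 2 := by push_cast; ring
  rw [this, Real.rpow_add (by positivity)]
  ring

open scoped MatrixOrder in
theorem exists_factor {ι : Type*} [Fintype ι] [DecidableEq ι] {S : Matrix ι ι ℝ}
    (hS : S.PosSemidef) : ∃ M : Matrix ι ι ℝ, S = Mᵀ * M := by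
  obtain ⟨M, hM⟩ := CStarAlgebra.nonneg_iff_eq_star_mul_self.1 hS.nonneg
  exact ⟨M, by rw [hM]; rfl⟩

theorem integral_gaussPDF {ι : Type*} [Fintype ι] [DecidableEq ι] (μ : ι → ℝ)
    {S : Matrix ι ι ℝ} (hS : S.PosDef) : ∫ x, gaussPDF μ S x = 1 := by
  obtain ⟨M, hM⟩ := exists_factor hS.posSemidef.inv
  have hd : M.det ^ 2 = S.det⁻¹ := by
    have := congrArg det hM
    rw [det_mul, det_transpose, det_nonsing_inv, Ring.inverse_eq_inv'] at this
    rw [this]; ring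
  have hSp := hS.det_pos
  have hM0 : M.det ≠ 0 := by
    intro h0
    rw [h0] at hd
    have := inv_pos.2 hSp
    rw [← hd] at this
    simp at this
  have habs : |M.det| = S.det ^ (-(1 : ℝ) / 2) := by
    rw [← Real.sqrt_sq_eq_abs, hd, Real.sqrt_inv, Real.sqrt_eq_rpow, ← Real.rpow_neg hSp.le]
    norm_num
  unfold gaussPDF
  rw [integral_const_mul]
  rw [integral_sub_right_eq_self
    (fun x : ι → ℝ => Real.exp (-(1 / 2 : ℝ) * (x ⬝ᵥ (S⁻¹ *ᵥ x)))) μ]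
  have hq : ∀ x : ι → ℝ, Real.exp (-(1 / 2 : ℝ) * (x ⬝ᵥ (S⁻¹ *ᵥ x))) =
      (fun z : ι → ℝ => ∏ i, Real.exp (-(1 / 2 : ℝ) * z i ^ 2)) (toLin' M x) := by
    intro x
    simp only [toLin'_apply]
    rw [← Real.exp_sum, ← Finset.mul_sum, hM, ← mulVec_mulVec, dotProduct_mulVec,
      vecMul_transpose]
    simp [dotProduct, sq]
  simp_rw [hq]
  have hme : MeasurableEmbedding (toLin' M) := by
    have : Function.Injective (toLin' M) := by
      have := (Matrix.mulVec_injective_iff_isUnit (A := M)).2 ((isUnit_iff_isUnit_det _).2 hM0.isUnit)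
      exact this
    exact ((toLin' M).continuous_of_finiteDimensional).measurableEmbedding this
  have := hme.integral_map (μ := volume) (fun z : ι → ℝ => ∏ i, Real.exp (-(1 / 2 : ℝ) * z i ^ 2))
  rw [← this, Real.map_matrix_volume_pi_eq_smul_volume_pi hM0, integral_smul_measure,
    integral_fintype_prod_volume_eq_pow (fun t : ℝ => Real.exp (-(1 / 2 : ℝ) * t ^ 2)),
    integral_gaussian, ← habs, ENNReal.toReal_ofReal (abs_nonneg _), abs_inv, smul_eq_mul,
    show π / (1 / 2) = 2 * π by ring, Real.sqrt_eq_rpow, ← Real.rpow_natCast, ← Real.rpow_mul (by positivity)]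
  have h1 : |M.det| ≠ 0 := abs_ne_zero.2 hM0
  have h2 : (2 * π) ^ (-(Fintype.card ι : ℝ) / 2) * (2 * π) ^ (1 / 2 * (Fintype.card ι : ℝ)) = 1 := by
    rw [← Real.rpow_add (by positivity)]
    ring_nf
    simp
  field_simp
  field_simp at h2
  linarith

theorem integral_gaussPDF_mul {ι κ : Type*} [Fintype ι] [DecidableEq ι] [Fintype κ] [DecidableEq κ]
    (μ : ι → ℝ) {S : Matrix ι ι ℝ} (hS : S.PosDef) (A : Matrix κ ι ℝ) {B : Matrix κ κ ℝ}
    (hB : B.PosDef) (y : κ → ℝ) :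
    ∫ x, gaussPDF μ S x * gaussPDF (A *ᵥ x) B y = gaussPDF (A *ᵥ μ) (B + A * S * Aᵀ) y := by
  have hSd : IsUnit S.det := hS.det_pos.ne'.isUnit
  have hSi := hS.isUnit.invertible
  have hSt : Sᵀ = S := by simpa using hS.isHermitian.eq
  have hschur : B + A * S * Aᵀ - A * S * S⁻¹ * (S * Aᵀ) = B := by
    rw [mul_nonsing_inv_cancel_right _ _ hSd, Matrix.mul_assoc]; abel
  have hJ : (fromBlocks S (S * Aᵀ) (A * S) (B + A * S * Aᵀ)).PosDef := by
    have hps : (fromBlocks S (S * Aᵀ) (A * S) (B + A * S * Aᵀ)).PosSemidef := by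
      have := (PosDef.fromBlocks₁₁ (S * Aᵀ) (B + A * S * Aᵀ) hS).2 (by
        have e : (S * Aᵀ)ᴴ = A * S := by simp [hSt]
        rw [e, hschur]; exact hB.posSemidef)
      have e : (S * Aᵀ)ᴴ = A * S := by simp [hSt]
      rwa [e] at this
    rw [hps.posDef_iff_det_ne_zero, det_fromBlocks₁₁, invOf_eq_nonsing_inv, hschur]
    exact (mul_pos hS.det_pos hB.det_pos).ne'
  have hJ' : (fromBlocks (B + A * S * Aᵀ) (A * S) (S * Aᵀ) S).PosDef := by
    have := hJ.submatrix (e := Sum.swap) Sum.swap_leftInverse.injective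
    simpa using this
  have key : ∀ x, gaussPDF μ S x * gaussPDF (A *ᵥ x) B y =
      gaussPDF (A *ᵥ μ) (B + A * S * Aᵀ) y *
      gaussPDF (μ + (S * Aᵀ) *ᵥ ((B + A * S * Aᵀ)⁻¹ *ᵥ (y - A *ᵥ μ)))
        (S - S * Aᵀ * (B + A * S * Aᵀ)⁻¹ * (A * S)) x := by
    intro x
    rw [← gaussPDF_chain hJ', ← gaussPDF_reindex (Equiv.sumComm ι κ)]
    have c := gaussPDF_chain hJ μ x (A *ᵥ μ) y
    rw [hschur] at c
    have hm : A *ᵥ μ + (A * S) *ᵥ (S⁻¹ *ᵥ (x - μ)) = A *ᵥ x := by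
      rw [mulVec_mulVec, mul_nonsing_inv_cancel_right _ _ hSd, mulVec_sub]; abel
    rw [hm] at c
    rw [← c]
    congr 1
    · ext (i | i) <;> simp
    · ext (i | i) (j | j) <;> simp
    · ext (i | i) <;> simp
  simp_rw [key]
  rw [integral_const_mul, integral_gaussPDF _ (posDef_blocks hJ').2.2, mul_one]

theorem sub_blocks_posDef {d : Fin L → ℕ}
    {S : Matrix ((i : Fin L) × Fin (d i)) ((i : Fin L) × Fin (d i)) ℝ} (hS : S.PosDef) (l : Fin L) :
    (fromBlocks (prevBlock S l) (colBlock S l) (rowBlock S l) (diagBlock S l)).PosDef := by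
  have := hS.submatrix (e := Sum.elim (fun p : Below d l => p.val) (fun i => ⟨l, i⟩)) (by
    rintro (⟨p, hp⟩ | i) (⟨q, hq⟩ | j) h
    · simp at h; simp [h]
    · simp at h; subst h; simp at hp
    · simp at h; subst h; simp at hq
    · simpa using h)
  convert this using 1
  ext (i | i) (j | j) <;> rfl

theorem sigmaHat_posDef {d : Fin L → ℕ}
    {S : Matrix ((i : Fin L) × Fin (d i)) ((i : Fin L) × Fin (d i)) ℝ} (hS : S.PosDef) (l : Fin L) :
    (sigmaHat S l).PosDef := (posDef_blocks (sub_blocks_posDef hS l)).2.2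

theorem gaussPDF_prod_aux {d : Fin L → ℕ}
    {S : Matrix ((i : Fin L) × Fin (d i)) ((i : Fin L) × Fin (d i)) ℝ} (hS : S.PosDef)
    (μ F : ((i : Fin L) × Fin (d i)) → ℝ) (k : ℕ) (hk : k ≤ L) :
    gaussPDF (fun p : {p : (i : Fin L) × Fin (d i) // p.1.val < k} => μ p.val)
      (S.submatrix (fun p => p.val) (fun p => p.val)) (fun p => F p.val) =
    ∏ l : Fin k, gaussPDF (muHat μ S F (Fin.castLE hk l)) (sigmaHat S (Fin.castLE hk l))
      (blockVec F (Fin.castLE hk l)) := by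
  induction k with
  | zero =>
    have : IsEmpty {p : (i : Fin L) × Fin (d i) // p.1.val < 0} := ⟨fun p => by simpa using p.2⟩
    simp [gaussPDF]
  | succ k ih =>
    rw [Fin.prod_univ_castSucc]
    have ih' := ih (by omega)
    obtain ⟨l, hl⟩ : ∃ l, l = Fin.castLE hk (Fin.last k) := ⟨_, rfl⟩
    have hlv : l.val = k := by simp [hl]
    let e : Below d l ⊕ Fin (d l) → {p : (i : Fin L) × Fin (d i) // p.1.val < k + 1} :=
      Sum.elim (fun p => ⟨p.val, by have : p.val.1.val < l.val := p.2; omega⟩)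
        (fun i => ⟨⟨l, i⟩, by simp [hlv]⟩)
    have he : Function.Bijective e := by
      constructor
      · rintro (⟨p, hp⟩ | i) (⟨q, hq⟩ | j) h
        · simp [e] at h; simp [h]
        · simp [e] at h; subst h; simp at hp
        · simp [e] at h; subst h; simp at hq
        · simpa [e] using h
      · rintro ⟨⟨i, a⟩, hp⟩
        by_cases hi : i = l
        · subst hi; exact ⟨Sum.inr a, rfl⟩
        · refine ⟨Sum.inl ⟨⟨i, a⟩, ?_⟩, rfl⟩
          have : i.val ≠ l.val := fun h => hi (Fin.ext h)
          simp only at hp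
          show i.val < l.val
          omega
    rw [← gaussPDF_reindex (Equiv.ofBijective e he)]
    have c := gaussPDF_chain (sub_blocks_posDef hS l) (belowVec μ l) (belowVec F l)
      (blockVec μ l) (blockVec F l)
    have e2 : gaussPDF (belowVec μ l) (prevBlock S l) (belowVec F l) =
        gaussPDF (fun p : {p : (i : Fin L) × Fin (d i) // p.1.val < k} => μ p.val)
          (S.submatrix (fun p => p.val) (fun p => p.val)) (fun p => F p.val) := by
      rw [← gaussPDF_reindex (Equiv.subtypeEquivRight (p := fun p => p.1 < l)
        (q := fun p : (i : Fin L) × Fin (d i) => p.1.val < k)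
        (fun p => by rw [Fin.lt_def, hlv]))]
      rfl
    rw [e2, ih'] at c
    rw [← hl]
    refine Eq.trans ?_ c
    congr 1
    · ext (i | i) <;> rfl
    · ext (i | i) (j | j) <;> rfl
    · ext (i | i) <;> rfl

theorem gaussPDF_prod {d : Fin L → ℕ}
    {S : Matrix ((i : Fin L) × Fin (d i)) ((i : Fin L) × Fin (d i)) ℝ} (hS : S.PosDef)
    (μ F : ((i : Fin L) × Fin (d i)) → ℝ) :
    gaussPDF μ S F = ∏ l : Fin L, gaussPDF (muHat μ S F l) (sigmaHat S l) (blockVec F l) := by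
  have := gaussPDF_prod_aux hS μ F L le_rfl
  rw [← gaussPDF_reindex (Equiv.subtypeUnivEquiv
    (p := fun p : (i : Fin L) × Fin (d i) => p.1.val < L) (fun p => p.1.2))]
  exact this

theorem blockDiagonal'_posDef {d : Fin L → ℕ} {B : ∀ l, Matrix (Fin (d l)) (Fin (d l)) ℝ}
    (hB : ∀ l, (B l).PosDef) : (blockDiagonal' B).PosDef := by
  have hmv : ∀ (x : ((i : Fin L) × Fin (d i)) → ℝ) l i,
      (blockDiagonal' B *ᵥ x) ⟨l, i⟩ = (B l *ᵥ blockVec x l) i := by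
    intro x l i
    simp only [mulVec, dotProduct, Fintype.sum_sigma]
    rw [Finset.sum_eq_single l]
    · simp [blockVec]
    · intro b _ hb
      simp [blockDiagonal'_apply_ne _ _ _ hb.symm]
    · simp
  rw [posDef_iff_dotProduct_mulVec]
  constructor
  · rw [IsHermitian, blockDiagonal'_conjTranspose]
    congr 1
    ext1 l
    exact (hB l).isHermitian
  · intro x hx
    have e : star x ⬝ᵥ (blockDiagonal' B *ᵥ x) =
        ∑ l, star (blockVec x l) ⬝ᵥ (B l *ᵥ blockVec x l) := by
      rw [dotProduct, Fintype.sum_sigma]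
      refine Finset.sum_congr rfl fun l _ => ?_
      simp only [hmv]
      rfl
    rw [e]
    obtain ⟨⟨l, i⟩, hi⟩ := Function.ne_iff.1 hx
    refine Finset.sum_pos' (fun l _ => (hB l).posSemidef.dotProduct_mulVec_nonneg _)
      ⟨l, Finset.mem_univ _, ?_⟩
    exact (posDef_iff_dotProduct_mulVec.1 (hB l)).2 (fun h => hi (congrFun h i))

theorem blockDiagonal'_mulVec_aux {d m : Fin L → ℕ} (A : ∀ l, Matrix (Fin (d l)) (Fin (m l)) ℝ)
    (x : ((i : Fin L) × Fin (m i)) → ℝ) (p : (i : Fin L) × Fin (d i)) :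
    (blockDiagonal' A *ᵥ x) p = (A p.1 *ᵥ fun a => x ⟨p.1, a⟩) p.2 := by
  obtain ⟨l, i⟩ := p
  simp only [mulVec, dotProduct, Fintype.sum_sigma]
  rw [Finset.sum_eq_single l]
  · simp
  · intro b _ hb
    simp [blockDiagonal'_apply_ne _ _ _ hb.symm]
  · simp

theorem Stilde_eq (T : Fin (L + 1) → ℕ) (m : Fin L → ℕ)
    (A : ∀ l : Fin L, (Fin (T l.castSucc) → ℝ) → Matrix (Fin (T l.succ)) (Fin (m l)) ℝ)
    (B : ∀ l : Fin L, (Fin (T l.castSucc) → ℝ) → Matrix (Fin (T l.succ)) (Fin (T l.succ)) ℝ)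
    (SM : Matrix ((i : Fin L) × Fin (m i)) ((i : Fin L) × Fin (m i)) ℝ)
    (f : ∀ l : Fin (L + 1), Fin (T l) → ℝ) :
    Stilde T m A B SM f = blockDiagonal' (fun l => B l (f l.castSucc)) +
      blockDiagonal' (fun l => A l (f l.castSucc)) * SM *
        (blockDiagonal' (fun l => A l (f l.castSucc)))ᵀ := by
  ext ⟨l, i⟩ ⟨l', j⟩
  rw [Stilde, of_apply, Matrix.add_apply]
  congr 1
  · by_cases h : l = l'
    · subst h; simp
    · rw [blockDiagonal'_apply_ne _ _ _ h]; simp [h]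
  · set A' := blockDiagonal' (fun l => A l (f l.castSucc)) with hA'
    have h1 : ∀ q, (A' * SM) ⟨l, i⟩ q = (A l (f l.castSucc) *ᵥ fun a => SM ⟨l, a⟩ q) i := by
      intro q
      have := blockDiagonal'_mulVec_aux (fun l => A l (f l.castSucc)) (fun r => SM r q) ⟨l, i⟩
      exact this
    have h2 := blockDiagonal'_mulVec_aux (fun l => A l (f l.castSucc))
      (fun r => (A' * SM) ⟨l, i⟩ r) ⟨l', j⟩
    have h3 : (A' * SM * A'ᵀ) ⟨l, i⟩ ⟨l', j⟩ = (A' *ᵥ fun r => (A' * SM) ⟨l, i⟩ r) ⟨l', j⟩ := by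
      rw [mul_apply]
      simp [mulVec, dotProduct, mul_comm]
    rw [h3, h2]
    simp only [h1]
    rw [mul_apply]
    simp only [mulVec, dotProduct, mul_apply, transpose_apply, SMblock, of_apply]
    exact Finset.sum_congr rfl fun _ _ => mul_comm _ _

/-- **Theorem 1 (deep-GP marginalisation).**  Under the deep-GP marginalisation setup,
each `Σ̂^l` is symmetric positive definite and
`∫ N(f_M; μ_M, S_M) ∏_l N(f^l; A^l(f^{l−1}) f_M^l, B^l(f^{l−1})) df_M
  = ∏_l N(f^l; μ̂^l, Σ̂^l)`:
the inducing outputs can be marginalised analytically and the joint density of the layer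
outputs factorises into a chain of Gaussian conditionals. -/
theorem deep_gp_marginalisation (L : ℕ) (hL : 1 ≤ L)
    (T : Fin (L + 1) → ℕ) (m : Fin L → ℕ)
    (μM : ((i : Fin L) × Fin (m i)) → ℝ)
    (SM : Matrix ((i : Fin L) × Fin (m i)) ((i : Fin L) × Fin (m i)) ℝ)
    (hSM : SM.PosDef)
    (A : ∀ l : Fin L, (Fin (T l.castSucc) → ℝ) → Matrix (Fin (T l.succ)) (Fin (m l)) ℝ)
    (B : ∀ l : Fin L, (Fin (T l.castSucc) → ℝ) → Matrix (Fin (T l.succ)) (Fin (T l.succ)) ℝ)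
    (hAmeas : ∀ l i j, Measurable fun x => A l x i j)
    (hBmeas : ∀ l i j, Measurable fun x => B l x i j)
    (hBpd : ∀ l x, (B l x).PosDef)
    (hInv : ∀ (f : ∀ l : Fin (L + 1), Fin (T l) → ℝ) (l : Fin L),
      IsUnit (prevBlock (Stilde T m A B SM f) l).det) :
    ∀ f : ∀ l : Fin (L + 1), Fin (T l) → ℝ,
      (∀ l : Fin L, (sigmaHat (Stilde T m A B SM f) l).PosDef) ∧
      (∫ fM : ((i : Fin L) × Fin (m i)) → ℝ,
          gaussPDF μM SM fM *
            ∏ l : Fin L,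
              gaussPDF (A l (f l.castSucc) *ᵥ fun a => fM ⟨l, a⟩) (B l (f l.castSucc))
                (f l.succ)) =
        ∏ l : Fin L,
          gaussPDF
            (muHat (muTilde T m A μM f) (Stilde T m A B SM f) (fun p => f p.1.succ p.2) l)
            (sigmaHat (Stilde T m A B SM f) l) (f l.succ) := by
  intro f
  have hB' : (blockDiagonal' (fun l => B l (f l.castSucc))).PosDef :=
    blockDiagonal'_posDef fun l => hBpd l _
  have hSt : (Stilde T m A B SM f).PosDef := by
    rw [Stilde_eq]
    refine hB'.add_posSemidef ?_
    have := hSM.posSemidef.mul_mul_conjTranspose_same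
      (blockDiagonal' (fun l => A l (f l.castSucc)))
    simpa using this
  refine ⟨fun l => sigmaHat_posDef hSt l, ?_⟩
  have hμ : muTilde T m A μM f = blockDiagonal' (fun l => A l (f l.castSucc)) *ᵥ μM := by
    ext p
    rw [blockDiagonal'_mulVec_aux]
    rfl
  have hr := gaussPDF_prod hSt (muTilde T m A μM f) (fun p => f p.1.succ p.2)
  refine Eq.trans ?_ hr
  rw [Stilde_eq, hμ, ← integral_gaussPDF_mul μM hSM _ hB']
  congr 1
  ext fM
  rw [gaussPDF_prod hB']
  congr 1
  refine Finset.prod_congr rfl fun l _ => ?_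
  have hrow : rowBlock (blockDiagonal' (fun l => B l (f l.castSucc))) l = 0 := by
    ext i q
    exact blockDiagonal'_apply_ne (fun l => B l (f l.castSucc)) i q.val.2 (ne_of_gt q.2)
  have hdiag : diagBlock (blockDiagonal' (fun l => B l (f l.castSucc))) l = B l (f l.castSucc) := by
    ext i q
    exact blockDiagonal'_apply_eq (fun l => B l (f l.castSucc)) l i q
  rw [muHat, sigmaHat, hrow, hdiag]
  simp only [zero_mulVec, Matrix.zero_mul, add_zero, sub_zero]
  congr 1
  ext i
  exact (blockDiagonal'_mulVec_aux (fun l => A l (f l.castSucc)) fM ⟨l, i⟩).symm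

end
end

section
/- Sparsity preservation of the Cholesky factor for stripes-and-arrow covariance matrices: fix L ≥ 2, τ ≥ 1, M ≥ 1, and let I := {(l, t) : 1 ≤ l ≤ L−1, 1 ≤ t ≤ τ} ∪ {(L, 1)} be ordered lexicographically (all pairs of layer l before layer l+1, and (L, 1) last). Let S be a symmetric positive definite matrix of size M·|I| composed of M×M blocks S_{(l,t),(l',t')} indexed by I × I, and assume the stripes-and-arrow pattern: S_{(l,t),(l',t')} = 0 whenever t ≠ t', l ≠ L and l' ≠ L. Then any lower triangular matrix R with positive diagonal entries satisfying R Rᵀ = S has the same sparsity pattern: R_{(l,t),(l',t')} = 0 whenever (l, t) > (l', t') fails in the block ordering, and also whenever l < L and t ≠ t'. -/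
open Matrix

/-- Position of a block index in the lexicographic ordering of
`I = {(l, t) : 1 ≤ l ≤ L−1, 1 ≤ t ≤ τ} ∪ {(L, 1)}`: all pairs of the latent layers
(ordered lexicographically) come first, and `(L, 1)` (encoded `Sum.inr ()`) comes last. -/
def blockOrd (L τ : ℕ) : (Fin (L - 1) × Fin τ) ⊕ Unit → ℕ := fun x =>
  match x with
  | Sum.inl a => a.1.val * τ + a.2.val
  | Sum.inr _ => (L - 1) * τ

theorem aux_inj {m q r i j : ℕ} (hi : i < m) (hj : j < m) (h : q * m + i = r * m + j) :
    q = r ∧ i = j := by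
  have hm : 0 < m := by omega
  have h1 : (q * m + i) / m = q := by
    rw [mul_comm, Nat.mul_add_div hm, Nat.div_eq_of_lt hi, add_zero]
  have h2 : (r * m + j) / m = r := by
    rw [mul_comm, Nat.mul_add_div hm, Nat.div_eq_of_lt hj, add_zero]
  have h3 : q = r := by rw [← h1, ← h2, h]
  subst h3
  exact ⟨rfl, by omega⟩

theorem aux_lt {m q r i : ℕ} (hi : i < m) (h : q < r) : q * m + i < r * m := by
  have : (q + 1) * m ≤ r * m := Nat.mul_le_mul_right m h
  rw [add_mul] at this
  omega

/-- **Sparsity preservation of the Cholesky factor for stripes-and-arrow covariance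
matrices.**  If `S` is symmetric positive definite with the stripes-and-arrow pattern
(`S_{(l,t),(l',t')} = 0` whenever `t ≠ t'`, `l ≠ L`, `l' ≠ L`), then any lower triangular
`R` with positive diagonal entries satisfying `R Rᵀ = S` has the same sparsity pattern:
its blocks strictly above the block diagonal vanish, and its latent-layer blocks with
`t ≠ t'` vanish. -/
theorem stripes_and_arrow_cholesky_sparsity (L τ M : ℕ) (hL : 2 ≤ L) (hτ : 1 ≤ τ)
    (hM : 1 ≤ M)
    (S : Matrix (((Fin (L - 1) × Fin τ) ⊕ Unit) × Fin M)
      (((Fin (L - 1) × Fin τ) ⊕ Unit) × Fin M) ℝ)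
    (hS : S.PosDef)
    (hPattern : ∀ a b : Fin (L - 1) × Fin τ, a.2 ≠ b.2 →
      ∀ i j : Fin M, S (Sum.inl a, i) (Sum.inl b, j) = 0)
    (R : Matrix (((Fin (L - 1) × Fin τ) ⊕ Unit) × Fin M)
      (((Fin (L - 1) × Fin τ) ⊕ Unit) × Fin M) ℝ)
    (hRtri : ∀ x y : ((Fin (L - 1) × Fin τ) ⊕ Unit) × Fin M,
      blockOrd L τ x.1 * M + x.2.val < blockOrd L τ y.1 * M + y.2.val → R x y = 0)
    (hRdiag : ∀ x : ((Fin (L - 1) × Fin τ) ⊕ Unit) × Fin M, 0 < R x x)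
    (hRchol : R * Rᵀ = S) :
    (∀ x y : ((Fin (L - 1) × Fin τ) ⊕ Unit) × Fin M,
      blockOrd L τ x.1 < blockOrd L τ y.1 → R x y = 0) ∧
      ∀ a b : Fin (L - 1) × Fin τ, a.2 ≠ b.2 →
        ∀ i j : Fin M, R (Sum.inl a, i) (Sum.inl b, j) = 0 := by
  refine ⟨fun x y h => hRtri x y ?_, ?_⟩
  · have := aux_lt x.2.isLt h
    omega
  have key : ∀ n : ℕ, ∀ (b : Fin (L - 1) × Fin τ) (j : Fin M),
      blockOrd L τ (Sum.inl b) * M + j.val = n →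
      ∀ (a : Fin (L - 1) × Fin τ) (i : Fin M), a.2 ≠ b.2 →
        R (Sum.inl a, i) (Sum.inl b, j) = 0 := by
    intro n
    induction n using Nat.strong_induction_on with
    | _ n ih =>
    intro b j hn a i hab
    have h0 := hPattern a b hab i j
    rw [← hRchol, Matrix.mul_apply] at h0
    simp only [Matrix.transpose_apply] at h0
    rw [Finset.sum_eq_single (Sum.inl b, j)] at h0
    · exact (mul_eq_zero.mp h0).resolve_right (hRdiag _).ne'
    · rintro ⟨c, k⟩ - hne
      rcases lt_trichotomy (blockOrd L τ (Sum.inl b) * M + j.val)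
        (blockOrd L τ c * M + k.val) with h | h | h
      · rw [hRtri (Sum.inl b, j) (c, k) h, mul_zero]
      · exfalso
        obtain ⟨h1, h2⟩ := aux_inj j.isLt k.isLt h
        have h2 : j = k := Fin.ext h2
        subst h2
        rcases c with c | c
        · obtain ⟨h3, h4⟩ := aux_inj b.2.isLt c.2.isLt h1
          apply hne
          rw [(Prod.ext (Fin.ext h3) (Fin.ext h4) : b = c)]
        · have h5 := aux_lt b.2.isLt b.1.isLt
          simp only [blockOrd] at h1
          omega
      · rcases c with c | c
        · by_cases hc : a.2 = c.2
          · rw [ih _ (hn ▸ h) c k rfl b j (fun e => hab (hc.trans e.symm)), mul_zero]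
          · rw [ih _ (hn ▸ h) c k rfl a i hc, zero_mul]
        · exfalso
          have h5 : blockOrd L τ (Sum.inl b) < blockOrd L τ (Sum.inr c) :=
            aux_lt b.2.isLt b.1.isLt
          have h6 := aux_lt j.isLt h5
          omega
    · intro h
      exact absurd (Finset.mem_univ _) h
  intro a b hab i j
  exact key _ b j rfl a i hab
end
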